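/- arXiv:2008.10430 — 2 statements merged into one kernel-verified Lean document; each statement's English description precedes it below -/
import Mathlib

section
/- Let G₁ be an r₁-regular graph on n₁ vertices and m₁ edges, let p,q ≥ 1 be integers, let G₂ = K_{p,q}, and let α ∈ [0,1]. (1) If r₁ = 1, then the A_α-spectrum of the R-edge join G₁⟨e⟩G₂ consists precisely of: 3α − 1; α(1+p) repeated q−1 times; α(1+q) repeated p−1 times; and the four roots of F(x) = (x² − (2α+αp+αq+α+1)x + α²p + α²q + 6α + αp + αq − 2)·(x² − (2α+αp+αq)x + α² + α²p + α²q + 2αpq − pq) − (1−α)²(x−α−1)(px + qx − αp − αq − αp² − αq² − 2αpq + 2pq). (2) If r₁ ≥ 2, then the A_α-spectrum of G₁⟨e⟩G₂ consists precisely of: α(2+p+q) repeated m₁−n₁ times; α(m₁+p) repeated q−1 times; α(m₁+q) repeated p−1 times; the two roots of G_i(x) = x² − (2α+αr₁+αp+αq+λ_i(A_α(G₁)))x + α²r₁p + α²r₁q + 3αr₁ − r₁ + (3α+αp+αq−1)λ_i(A_α(G₁)) for each i = 2,…,n₁; and the four roots of F(x) = (x² − (2α+αr₁+αp+αq+r₁)x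 + α²r₁p + α²r₁q + 6αr₁ + αr₁p + αr₁q − 2r₁)·(x² − (2αm₁+αp+αq)x + α²m₁² + α²m₁p + α²m₁q + 2αpq − pq) − m₁(1−α)²(x−αr₁−r₁)(px + qx − αm₁p − αm₁q − αp² − αq² − 2αpq + 2pq). -/
open Matrix Polynomial
open scoped Classical

noncomputable section

/-- `A_α(G) = α·D(G) + (1-α)·A(G)`, where `D(G)` is the diagonal degree matrix and
`A(G)` the adjacency matrix. -/
def Aalpha {V : Type*} [Fintype V] (G : SimpleGraph V) (α : ℝ) : Matrix V V ℝ :=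
  α • Matrix.diagonal (fun v => (G.degree v : ℝ)) + (1 - α) • G.adjMatrix ℝ

/-- The `R`-edge join `G₁⟨e⟩G₂`: take the `R`-graph `R(G₁)` (for each edge of `G₁` a
new vertex joined to both of its endpoints) together with `G₂`, and join every inserted
vertex of `R(G₁)` with every vertex of `G₂`. -/
def rEdgeJoin {V₁ V₂ : Type*} (G₁ : SimpleGraph V₁) (G₂ : SimpleGraph V₂) :
    SimpleGraph (V₁ ⊕ (↥G₁.edgeSet ⊕ V₂)) :=
  SimpleGraph.fromRel fun a b =>
    match a, b with
    | Sum.inl v, Sum.inl w => G₁.Adj v w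
    | Sum.inl v, Sum.inr (Sum.inl e) => v ∈ (e : Sym2 V₁)
    | Sum.inr (Sum.inl _), Sum.inr (Sum.inr _) => True
    | Sum.inr (Sum.inr u), Sum.inr (Sum.inr w) => G₂.Adj u w
    | _, _ => False

namespace Matrix

variable {K m n : Type*} [Fintype m] [DecidableEq m] [Fintype n] [DecidableEq n]

/-- Schur complement formula, with a solution of `D * W = C` in place of an inverse of `D`. -/
theorem det_fromBlocks_of_mul_eq [CommRing K] (A : Matrix m m K) (B : Matrix m n K)
    (C : Matrix n m K) (D : Matrix n n K) (W : Matrix n m K) (hW : D * W = C) :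
    (fromBlocks A B C D).det = (A - B * W).det * D.det := by
  have h : fromBlocks A B C D * fromBlocks 1 0 (-W) 1 = fromBlocks (A - B * W) B 0 D := by
    simp [fromBlocks_multiply, hW, sub_eq_add_neg]
  simpa [det_fromBlocks_zero₂₁] using congrArg det h

/-- Subtracting a constant `k` from all entries of a matrix. -/
theorem det_sub_const_of_mulVec_eq_one [CommRing K] (M : Matrix m m K) (w : m → K)
    (hw : M *ᵥ w = 1) (k : K) :
    (M - of fun _ _ => k).det = M.det * (1 - k * ∑ i, w i) := by
  have h : M - of (fun _ _ => k) =
      M * (1 + replicateCol Unit w * replicateRow Unit fun _ => -k) := by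
    rw [Matrix.mul_add, ← Matrix.mul_assoc, ← replicateCol_mulVec, hw]
    ext i j
    simp [Matrix.mul_apply, sub_eq_add_neg]
  rw [h, det_mul, det_one_add_replicateCol_mul_replicateRow]
  simp [dotProduct, Finset.mul_sum, sub_eq_add_neg]

theorem det_smul_one_sub_const [Field K] {t : K} (ht : t ≠ 0) (k : K) :
    (t • (1 : Matrix m m K) - of fun _ _ => k).det =
      t ^ Fintype.card m * (1 - k * (Fintype.card m / t)) := by
  rw [det_sub_const_of_mulVec_eq_one _ (fun _ => t⁻¹)]
  · simp [div_eq_mul_inv]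
  · ext i
    simp [smul_mulVec, ht]

theorem det_fromBlocks_smul_one_const [Field K] (u : K) {v : K} (hu : u ≠ 0) (hv : v ≠ 0)
    (c : K) :
    (fromBlocks (u • (1 : Matrix m m K)) (of fun _ _ => -c) (of fun _ _ => -c)
      (v • (1 : Matrix n n K))).det =
      u ^ Fintype.card m * v ^ Fintype.card n *
        (1 - c ^ 2 * Fintype.card m * Fintype.card n / (u * v)) := by
  rw [det_fromBlocks_of_mul_eq _ _ _ _ (of fun _ _ => -c / v)]
  · have h : u • (1 : Matrix m m K) -
        (of fun _ _ => -c : Matrix m n K) * (of fun _ _ => -c / v : Matrix n m K) =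
        u • 1 - of fun _ _ => c ^ 2 * Fintype.card n / v := by
      ext i j
      simp [Matrix.mul_apply]
      ring
    rw [h, det_smul_one_sub_const hu]
    simp
    field_simp
  · ext i j
    simp
    field_simp

theorem fromBlocks_smul_one_const_mulVec [Field K] {u v c h : K} (hh : h ≠ 0)
    (hdef : h = u * v - c ^ 2 * Fintype.card m * Fintype.card n) :
    fromBlocks (u • (1 : Matrix m m K)) (of fun _ _ => -c) (of fun _ _ => -c)
      (v • (1 : Matrix n n K)) *ᵥ
        Sum.elim (fun _ => (v + c * Fintype.card n) / h) (fun _ => (u + c * Fintype.card m) / h) =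
      1 := by
  ext i
  rcases i with i | i <;>
  · simp [mulVec, dotProduct, one_apply]
    field_simp
    rw [hdef]
    ring

theorem det_smul_one_sub_smul [Field K] (M : Matrix m m K) (μ : m → K)
    (hM : M.charpoly = ∏ i, (Polynomial.X - Polynomial.C (μ i))) (s b : K) :
    (s • (1 : Matrix m m K) - b • M).det = ∏ i, (s - b * μ i) := by
  rcases eq_or_ne b 0 with rfl | hb
  · simp
  have h : s • (1 : Matrix m m K) - b • M = b • (scalar m (s / b) - M) := by
    rw [smul_sub, scalar_apply, ← smul_one_eq_diagonal, smul_smul, mul_div_cancel₀ _ hb]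
  rw [h, det_smul, ← eval_charpoly, hM, Polynomial.eval_prod, ← Finset.card_univ,
    ← Finset.prod_const, ← Finset.prod_mul_distrib]
  refine Finset.prod_congr rfl fun i _ => ?_
  simp
  field_simp

theorem det_fromBlocks_join [Field K] {l : Type*} [Fintype l] [DecidableEq l]
    (P : Matrix l l K) (B : Matrix l m K) (Q : Matrix n n K) (w : n → K) (hw : Q *ᵥ w = 1)
    {r t c k : K} (ht : t ≠ 0) (hB : ∀ i, ∑ e, B i e = r)
    (hk : k * (t - c ^ 2 * Fintype.card m * ∑ i, w i) = c ^ 2 * r * ∑ i, w i) :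
    (fromBlocks P (fromCols (-(c • B)) 0) (fromRows (-(c • Bᵀ)) 0)
      (fromBlocks (t • (1 : Matrix m m K)) (of fun _ _ => -c) (of fun _ _ => -c) Q)).det =
      (P - (c ^ 2 / t) • (B * Bᵀ) - of fun _ _ => c ^ 2 / t * k * r).det *
        (t ^ Fintype.card m * (1 - c ^ 2 * (∑ i, w i) * (Fintype.card m / t)) * Q.det) := by
  rw [det_fromBlocks_of_mul_eq _ _ _ _
    (fromRows (of fun e i => -(c / t) * (B i e + k))
      (of fun x _ => -(c ^ 2 / t) * (r + k * Fintype.card m) * w x))]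
  · congr 1
    · rw [fromCols_mul_fromRows]
      congr 1
      ext i j
      simp only [sub_apply, add_apply, mul_apply, smul_apply, of_apply, neg_apply, smul_eq_mul,
        transpose_apply, zero_apply, zero_mul, Finset.sum_const_zero, add_zero]
      have h : ∑ e, -(c * B i e) * (-(c / t) * (B j e + k)) =
          c ^ 2 / t * ∑ e, B i e * B j e + c ^ 2 / t * k * ∑ e, B i e := by
        rw [Finset.mul_sum, Finset.mul_sum, ← Finset.sum_add_distrib]
        exact Finset.sum_congr rfl fun e _ => by ring
      rw [h, hB]
      ring
    · have hS : (fromBlocks (t • (1 : Matrix m m K)) (of fun _ _ => -c) (of fun _ _ => -c) Q).det =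
          (fromBlocks Q (of fun _ _ => -c) (of fun _ _ => -c) (t • (1 : Matrix m m K))).det := by
        rw [← det_submatrix_equiv_self (Equiv.sumComm n m)]
        congr 1
        ext (_ | _) (_ | _) <;> rfl
      rw [hS, det_fromBlocks_of_mul_eq _ _ _ _ (of fun _ _ => -(c / t))]
      · have hQ : Q - (of fun _ _ => -c : Matrix n m K) * (of fun _ _ => -(c / t) : Matrix m n K) =
            Q - of fun _ _ => c ^ 2 * (Fintype.card m / t) := by
          ext i j
          simp [Matrix.mul_apply]
          ring
        rw [hQ, det_sub_const_of_mulVec_eq_one _ w hw, det_smul, det_one]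
        ring
      · ext i j
        simp
        field_simp
  · rw [fromBlocks_mul_fromRows]
    congr 1
    · ext e i
      simp only [smul_mul, Matrix.one_mul, add_apply, smul_apply, of_apply, smul_eq_mul,
        mul_apply, neg_apply, transpose_apply, ← Finset.mul_sum]
      field_simp
      linear_combination (-c) * hk
    · ext x i
      have hx : ∑ y, Q x y * w y = 1 := congrFun hw x
      have h₁ : ∑ e, -c * (-(c / t) * (B i e + k)) =
          c ^ 2 / t * (r + k * Fintype.card m) := by
        rw [← hB i, ← Finset.mul_sum, ← Finset.mul_sum, Finset.sum_add_distrib]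
        simp
        ring
      have h₂ : ∑ y, Q x y * (-(c ^ 2 / t) * (r + k * Fintype.card m) * w y) =
          -(c ^ 2 / t) * (r + k * Fintype.card m) * ∑ y, Q x y * w y := by
        rw [Finset.mul_sum]
        exact Finset.sum_congr rfl fun y _ => by ring
      simp only [add_apply, mul_apply, of_apply, zero_apply]
      rw [h₁, h₂, hx]
      ring

end Matrix

namespace SimpleGraph

/-- The vertex-edge incidence matrix of `G`, with columns indexed by the edges of `G` only. -/
def edgeIncMatrix {V : Type*} (G : SimpleGraph V) : Matrix V G.edgeSet ℝ :=
  of fun v e => if v ∈ (e : Sym2 V) then 1 else 0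

theorem sum_edgeSet_eq_sum_sym2 {V : Type*} [Fintype V] (G : SimpleGraph V) (f : Sym2 V → ℝ)
    (hf : ∀ e ∉ G.edgeSet, f e = 0) :
    ∑ e : G.edgeSet, f e = ∑ e, f e := by
  rw [← Finset.sum_subset (Finset.subset_univ G.edgeFinset) (by simpa using hf)]
  exact (Finset.sum_subtype G.edgeFinset (by simp) f).symm

theorem edgeIncMatrix_apply {V : Type*} [DecidableEq V] (G : SimpleGraph V) (v : V) (e : G.edgeSet) :
    G.edgeIncMatrix v e = G.incMatrix ℝ v e := by
  simp [edgeIncMatrix, incMatrix_apply', incidenceSet, e.2]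

theorem incMatrix_eq_zero_of_notMem {V : Type*} [DecidableEq V] (G : SimpleGraph V)
    {v : V} {e : Sym2 V} (he : e ∉ G.edgeSet) :
    G.incMatrix ℝ v e = 0 :=
  G.incMatrix_of_notMem_incidenceSet fun h => he h.1

variable {V : Type*} [Fintype V] [DecidableEq V] (G : SimpleGraph V)

theorem sum_edgeIncMatrix_row (v : V) : ∑ e, G.edgeIncMatrix v e = G.degree v := by
  simp_rw [edgeIncMatrix_apply]
  rw [G.sum_edgeSet_eq_sum_sym2 (fun e => G.incMatrix ℝ v e)
    fun e he => G.incMatrix_eq_zero_of_notMem he, sum_incMatrix_apply]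

theorem sum_edgeIncMatrix_col (e : G.edgeSet) : ∑ v, G.edgeIncMatrix v e = 2 := by
  simp_rw [edgeIncMatrix_apply]
  exact G.sum_incMatrix_apply_of_mem_edgeSet e.2

theorem edgeIncMatrix_mul_transpose :
    G.edgeIncMatrix * G.edgeIncMatrixᵀ =
      diagonal (fun v => (G.degree v : ℝ)) + G.adjMatrix ℝ := by
  ext v w
  have h := congrFun₂ (G.incMatrix_mul_transpose (R := ℝ)) v w
  simp only [mul_apply, transpose_apply, edgeIncMatrix_apply] at h ⊢
  rw [G.sum_edgeSet_eq_sum_sym2 (fun e => G.incMatrix ℝ v e * G.incMatrix ℝ w e)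
    fun e he => by simp [G.incMatrix_eq_zero_of_notMem he], h]
  by_cases hvw : v = w
  · subst hvw
    simp
  · simp [hvw]

theorem IsRegularOfDegree.card_mul_eq_two_mul_card_edgeSet {V : Type*} [Fintype V]
    {G : SimpleGraph V} {r : ℕ} (hG : G.IsRegularOfDegree r) :
    Fintype.card V * r = 2 * Fintype.card G.edgeSet := by
  have h := G.sum_degrees_eq_twice_card_edges
  simp only [hG.degree_eq, Finset.sum_const, Finset.card_univ, smul_eq_mul] at h
  rw [h, ← edgeFinset_card]

end SimpleGraph

section Aalpha

variable {V : Type*} [Fintype V] [DecidableEq V] (G : SimpleGraph V) (α : ℝ)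

theorem Aalpha_apply (v w : V) :
    Aalpha G α v w = (if v = w then α * G.degree v else 0) +
      if G.Adj v w then 1 - α else 0 := by
  simp [Aalpha, diagonal_apply]

theorem Aalpha_eq_of_isRegularOfDegree {r : ℕ} (hG : G.IsRegularOfDegree r) :
    Aalpha G α = (α * r) • 1 + (1 - α) • G.adjMatrix ℝ := by
  ext v w
  simp [Aalpha_apply, hG.degree_eq v, one_apply]

theorem Aalpha_mulVec_const {r : ℕ} (hG : G.IsRegularOfDegree r) (a : ℝ) :
    Aalpha G α *ᵥ (fun _ => a) = fun _ => r * a := by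
  ext v
  rw [Aalpha_eq_of_isRegularOfDegree G α hG, add_mulVec, smul_mulVec, smul_mulVec, one_mulVec]
  have h := G.adjMatrix_mulVec_const_apply (a := a) (v := v)
  rw [hG.degree_eq v] at h
  change (G.adjMatrix ℝ *ᵥ fun _ => a) v = r * a at h
  simp only [Pi.add_apply, Pi.smul_apply, smul_eq_mul]
  linear_combination (1 - α) * h

theorem cast_degree_eq_sum {V : Type*} [Fintype V] (G : SimpleGraph V) (v : V) :
    (G.degree v : ℝ) = ∑ w, if G.Adj v w then 1 else 0 := by
  simp [← SimpleGraph.card_neighborFinset_eq_degree, SimpleGraph.neighborFinset_eq_filter]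

/-- All eigenvalues of `A_α` of an `r`-regular graph are at most `r`. -/
theorem le_of_charpoly_Aalpha_isRoot {r : ℕ} (hG : G.IsRegularOfDegree r)
    (hα : α ∈ Set.Icc (0 : ℝ) 1) {x : ℝ} (hx : (Aalpha G α).charpoly.eval x = 0) : x ≤ r := by
  by_contra! hlt
  rw [eval_charpoly] at hx
  refine det_ne_zero_of_sum_row_lt_diag (fun v => ?_) hx
  have hr : (0 : ℝ) ≤ r := r.cast_nonneg
  have hdiag : ‖(scalar V x - Aalpha G α) v v‖ = x - α * r := by
    have : 0 ≤ x - α * r := by nlinarith [hα.2]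
    rw [Matrix.sub_apply, Aalpha_apply, hG.degree_eq v]
    simp [abs_of_nonneg this]
  have hoff : ∑ w ∈ Finset.univ.erase v, ‖(scalar V x - Aalpha G α) v w‖ = (1 - α) * r := by
    rw [← hG.degree_eq v, cast_degree_eq_sum, Finset.mul_sum,
      ← Finset.sum_erase Finset.univ (a := v)
        (f := fun w => (1 - α) * if G.Adj v w then 1 else 0) (by simp)]
    refine Finset.sum_congr rfl fun w hw => ?_
    have hvw : v ≠ w := (Finset.ne_of_mem_erase hw).symm
    have : |α - 1| = 1 - α := by rw [abs_sub_comm, abs_of_nonneg (sub_nonneg.2 hα.2)]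
    by_cases h : G.Adj v w <;> simp [Aalpha_apply, hvw, h, this]
  rw [hdiag, hoff]
  linarith

theorem charpoly_Aalpha_isRoot [Nonempty V] {r : ℕ} (hG : G.IsRegularOfDegree r) :
    (Aalpha G α).charpoly.eval (r : ℝ) = 0 := by
  rw [eval_charpoly, ← exists_mulVec_eq_zero_iff]
  refine ⟨fun _ => 1, fun h => one_ne_zero (congrFun h (Classical.arbitrary V)), ?_⟩
  rw [sub_mulVec, Aalpha_mulVec_const G α hG]
  ext v
  simp

end Aalpha

section rEdgeJoin

variable {V₁ V₂ : Type*} {G₁ : SimpleGraph V₁} {G₂ : SimpleGraph V₂}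

@[simp] theorem rEdgeJoin_adj_inl_inl (v w : V₁) :
    (rEdgeJoin G₁ G₂).Adj (.inl v) (.inl w) ↔ G₁.Adj v w := by
  simpa [rEdgeJoin, G₁.adj_comm w v] using fun h => G₁.ne_of_adj h

@[simp] theorem rEdgeJoin_adj_inl_edge (v : V₁) (e : G₁.edgeSet) :
    (rEdgeJoin G₁ G₂).Adj (.inl v) (.inr (.inl e)) ↔ v ∈ (e : Sym2 V₁) := by
  simp [rEdgeJoin]

@[simp] theorem rEdgeJoin_adj_edge_inl (v : V₁) (e : G₁.edgeSet) :
    (rEdgeJoin G₁ G₂).Adj (.inr (.inl e)) (.inl v) ↔ v ∈ (e : Sym2 V₁) := by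
  simp [rEdgeJoin]

@[simp] theorem rEdgeJoin_not_adj_inl_inr (v : V₁) (u : V₂) :
    ¬(rEdgeJoin G₁ G₂).Adj (.inl v) (.inr (.inr u)) := by
  simp [rEdgeJoin]

@[simp] theorem rEdgeJoin_not_adj_inr_inl (v : V₁) (u : V₂) :
    ¬(rEdgeJoin G₁ G₂).Adj (.inr (.inr u)) (.inl v) := by
  simp [rEdgeJoin]

@[simp] theorem rEdgeJoin_not_adj_edge_edge (e f : G₁.edgeSet) :
    ¬(rEdgeJoin G₁ G₂).Adj (.inr (.inl e)) (.inr (.inl f)) := by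
  simp [rEdgeJoin]

@[simp] theorem rEdgeJoin_adj_edge_inr (e : G₁.edgeSet) (u : V₂) :
    (rEdgeJoin G₁ G₂).Adj (.inr (.inl e)) (.inr (.inr u)) := by
  simp [rEdgeJoin]

@[simp] theorem rEdgeJoin_adj_inr_edge (e : G₁.edgeSet) (u : V₂) :
    (rEdgeJoin G₁ G₂).Adj (.inr (.inr u)) (.inr (.inl e)) := by
  simp [rEdgeJoin]

@[simp] theorem rEdgeJoin_adj_inr_inr (u w : V₂) :
    (rEdgeJoin G₁ G₂).Adj (.inr (.inr u)) (.inr (.inr w)) ↔ G₂.Adj u w := by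
  simpa [rEdgeJoin, G₂.adj_comm w u] using fun h => G₂.ne_of_adj h

variable [Fintype V₁] [Fintype V₂]

theorem rEdgeJoin_degree_inl (v : V₁) :
    ((rEdgeJoin G₁ G₂).degree (.inl v) : ℝ) = 2 * G₁.degree v := by
  have h : ∑ e : G₁.edgeSet, (if v ∈ (e : Sym2 V₁) then (1 : ℝ) else 0) = G₁.degree v :=
    G₁.sum_edgeIncMatrix_row v
  rw [cast_degree_eq_sum]
  simp only [Fintype.sum_sum_type, rEdgeJoin_adj_inl_inl, rEdgeJoin_adj_inl_edge,
    rEdgeJoin_not_adj_inl_inr, if_false, Finset.sum_const_zero, add_zero]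
  rw [← cast_degree_eq_sum, two_mul]
  congr 1

theorem rEdgeJoin_degree_edge (e : G₁.edgeSet) :
    ((rEdgeJoin G₁ G₂).degree (.inr (.inl e)) : ℝ) = 2 + Fintype.card V₂ := by
  have h : ∑ v, (if v ∈ (e : Sym2 V₁) then (1 : ℝ) else 0) = 2 := G₁.sum_edgeIncMatrix_col e
  rw [cast_degree_eq_sum]
  simp only [Fintype.sum_sum_type, rEdgeJoin_adj_edge_inl, rEdgeJoin_not_adj_edge_edge,
    rEdgeJoin_adj_edge_inr, if_false, if_true, Finset.sum_const_zero, Finset.sum_const,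
    Finset.card_univ, nsmul_eq_mul, mul_one, zero_add]
  congr 1

theorem rEdgeJoin_degree_inr (u : V₂) :
    ((rEdgeJoin G₁ G₂).degree (.inr (.inr u)) : ℝ) = Fintype.card G₁.edgeSet + G₂.degree u := by
  rw [cast_degree_eq_sum]
  simp only [Fintype.sum_sum_type, rEdgeJoin_not_adj_inr_inl, rEdgeJoin_adj_inr_edge,
    rEdgeJoin_adj_inr_inr, if_false, if_true, Finset.sum_const_zero, Finset.sum_const,
    Finset.card_univ, nsmul_eq_mul, mul_one, zero_add]
  rw [← cast_degree_eq_sum]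

theorem scalar_sub_Aalpha_rEdgeJoin [DecidableEq V₁] [DecidableEq V₂] {r : ℕ}
    (hG : G₁.IsRegularOfDegree r)
    (α x : ℝ) :
    scalar _ x - Aalpha (rEdgeJoin G₁ G₂) α =
      fromBlocks ((x - α * r) • 1 - Aalpha G₁ α)
        (fromCols (-((1 - α) • G₁.edgeIncMatrix)) 0)
        (fromRows (-((1 - α) • G₁.edgeIncMatrixᵀ)) 0)
        (fromBlocks ((x - α * (2 + Fintype.card V₂)) • 1) (of fun _ _ => -(1 - α))
          (of fun _ _ => -(1 - α))
          ((x - α * Fintype.card G₁.edgeSet) • 1 - Aalpha G₂ α)) := by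
  ext (v | e | u) (w | f | y) <;>
    simp [Aalpha_apply, rEdgeJoin_degree_inl, rEdgeJoin_degree_edge, rEdgeJoin_degree_inr,
      SimpleGraph.edgeIncMatrix, one_apply, diagonal_apply]
  · rw [hG.degree_eq]
    split_ifs <;> ring
  · split_ifs <;> ring
  · split_ifs <;> ring

end rEdgeJoin

theorem smul_one_sub_Aalpha_completeBipartiteGraph (p q : ℕ) (α s : ℝ) :
    s • 1 - Aalpha (completeBipartiteGraph (Fin p) (Fin q)) α =
      fromBlocks ((s - α * q) • 1) (of fun _ _ => -(1 - α)) (of fun _ _ => -(1 - α))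
        ((s - α * p) • 1) := by
  have hl (i : Fin p) : ((completeBipartiteGraph (Fin p) (Fin q)).degree (.inl i) : ℝ) = q := by
    simp only [cast_degree_eq_sum, Fintype.sum_sum_type]
    simp
  have hr (j : Fin q) : ((completeBipartiteGraph (Fin p) (Fin q)).degree (.inr j) : ℝ) = p := by
    simp only [cast_degree_eq_sum, Fintype.sum_sum_type]
    simp
  ext (i | i) (j | j) <;> simp [Aalpha_apply, hl, hr, one_apply]
  all_goals split_ifs <;> ring

theorem det_scalar_sub_Aalpha_rEdgeJoin {V : Type*} [Fintype V] [DecidableEq V]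
    {G : SimpleGraph V} {r m p q : ℕ} (hp : 1 ≤ p) (hq : 1 ≤ q) (hG : G.IsRegularOfDegree r)
    (hm : Fintype.card G.edgeSet = m) {α x : ℝ} {μ : V → ℝ}
    (hμ : (Aalpha G α).charpoly = ∏ i, (X - C (μ i))) {t u v h s g : ℝ}
    (ht : t = x - α * (2 + p + q)) (hu : u = x - α * (m + q)) (hv : v = x - α * (m + p))
    (hh : h = u * v - (1 - α) ^ 2 * p * q) (hs : s = p * v + q * u + 2 * (1 - α) * p * q)
    (hg : g = t * (x - α * r - r) - 2 * (1 - α) ^ 2 * r)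
    (ht0 : t ≠ 0) (hu0 : u ≠ 0) (hv0 : v ≠ 0) (hh0 : h ≠ 0)
    (hs0 : t * h - (1 - α) ^ 2 * m * s ≠ 0) (hg0 : g ≠ 0) :
    (scalar _ x - Aalpha (rEdgeJoin G (completeBipartiteGraph (Fin p) (Fin q))) α).det *
        (g * t ^ Fintype.card V) =
      t ^ m * u ^ (p - 1) * v ^ (q - 1) *
        (∏ i, (t * (x - α * r - μ i) - (1 - α) * (μ i + r - 2 * α * r))) *
        (g * h - m * (1 - α) ^ 2 * (x - α * r - r) * s) := by
  have hnr : (Fintype.card V : ℝ) * r = 2 * m := by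
    rw [← hm]
    exact_mod_cast hG.card_mul_eq_two_mul_card_edgeSet
  set c := 1 - α with hc
  have hQ := smul_one_sub_Aalpha_completeBipartiteGraph p q α (x - α * m)
  rw [show x - α * m - α * q = u by rw [hu]; ring,
    show x - α * m - α * p = v by rw [hv]; ring, ← hc] at hQ
  have hw := fromBlocks_smul_one_const_mulVec (m := Fin p) (n := Fin q) hh0 (by simpa using hh)
  have hdetQ := det_fromBlocks_smul_one_const (m := Fin p) (n := Fin q) u hu0 hv0 c
  simp only [Fintype.card_fin] at hw hdetQ
  have hΓ : ∑ i, Sum.elim (fun _ : Fin p => (v + c * q) / h) (fun _ : Fin q => (u + c * p) / h) i =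
      s / h := by
    simp [hs]
    ring
  rw [scalar_sub_Aalpha_rEdgeJoin hG, hm, hQ]
  have hcard : x - α * (2 + (Fintype.card (Fin p ⊕ Fin q) : ℝ)) = t := by
    simp only [ht, Fintype.card_sum, Fintype.card_fin, Nat.cast_add]
    ring
  have hd : t - c ^ 2 * m * (s / h) = (t * h - c ^ 2 * m * s) / h := by field_simp
  rw [hcard, ← hc, det_fromBlocks_join _ _ _ _ hw ht0 (r := r)
    (k := c ^ 2 * r * s / (t * h - c ^ 2 * m * s))
    (fun i => by rw [G.sum_edgeIncMatrix_row, hG.degree_eq])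
    (by rw [hΓ, hm, hd, div_mul_div_cancel₀ hs0]; ring), hΓ, hm, hdetQ]
  have hY : (x - α * r) • 1 - Aalpha G α - (c ^ 2 / t) • (G.edgeIncMatrix * G.edgeIncMatrixᵀ) =
      (x - α * r - c ^ 2 / t * r + c / t * (α * r)) • (1 : Matrix V V ℝ) -
        (1 + c / t) • Aalpha G α := by
    rw [G.edgeIncMatrix_mul_transpose, Aalpha_eq_of_isRegularOfDegree G α hG]
    ext i j
    simp only [Matrix.sub_apply, Matrix.add_apply, Matrix.smul_apply, hG.degree_eq, one_apply,
      diagonal_apply, smul_eq_mul, ← hc]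
    split_ifs <;> ring
  have hY1 : ((x - α * r - c ^ 2 / t * r + c / t * (α * r)) • (1 : Matrix V V ℝ) -
      (1 + c / t) • Aalpha G α) *ᵥ (fun _ => t / g) = 1 := by
    rw [sub_mulVec, smul_mulVec, smul_mulVec, Aalpha_mulVec_const G α hG, one_mulVec]
    ext i
    simp only [Pi.sub_apply, Pi.smul_apply, smul_eq_mul, Pi.one_apply]
    field_simp
    rw [hg, show α = 1 - c by rw [hc]; ring]
    ring
  rw [hY, det_sub_const_of_mulVec_eq_one _ _ hY1, det_smul_one_sub_smul _ _ hμ]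
  have hprod : ∏ i, (t * (x - α * r - μ i) - c * (μ i + r - 2 * α * r)) =
      t ^ Fintype.card V *
        ∏ i, (x - α * r - c ^ 2 / t * r + c / t * (α * r) - (1 + c / t) * μ i) := by
    rw [← Finset.card_univ, ← Finset.prod_const, ← Finset.prod_mul_distrib]
    refine Finset.prod_congr rfl fun i _ => ?_
    field_simp
    rw [show α = 1 - c by rw [hc]; ring]
    ring
  rw [hprod]
  have hup : u ^ p = u ^ (p - 1) * u := by rw [← pow_succ, Nat.sub_add_cancel hp]
  have hvq : v ^ q = v ^ (q - 1) * v := by rw [← pow_succ, Nat.sub_add_cancel hq]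
  have hscalar : (1 - c ^ 2 / t * (c ^ 2 * r * s / (t * h - c ^ 2 * m * s)) * r *
      (Fintype.card V * (t / g))) * (1 - c ^ 2 * (s / h) * (m / t)) *
      (u * v * (1 - c ^ 2 * p * q / (u * v))) * g =
      g * h - m * c ^ 2 * (x - α * r - r) * s := by
    have h₁ : u * v * (1 - c ^ 2 * p * q / (u * v)) = h := by
      rw [hh]
      field_simp
    rw [h₁]
    have hd' : 1 - c ^ 2 * (s / h) * (m / t) = (t * h - c ^ 2 * m * s) / (t * h) := by field_simp
    have hxt : t * (x - α * r - r) = g + 2 * c ^ 2 * r := by rw [hg]; ring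
    refine mul_left_cancel₀ ht0 ?_
    have h₂ : t * ((1 - c ^ 2 / t * (c ^ 2 * r * s / (t * h - c ^ 2 * m * s)) * r *
        (Fintype.card V * (t / g))) * (1 - c ^ 2 * (s / h) * (m / t)) * h * g) =
        (t * h - c ^ 2 * m * s) * g - c ^ 4 * r * s * (Fintype.card V * r) := by
      rw [hd']
      generalize t * h - c ^ 2 * m * s = d at hs0 ⊢
      field_simp
    rw [h₂, hnr]
    linear_combination (m * c ^ 2 * s) * hxt
  rw [← hscalar, hup, hvq]
  simp only [Finset.sum_const, Finset.card_univ, nsmul_eq_mul]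
  ring

theorem Polynomial.eq_of_eval_eq_of_eval_ne_zero {P Q D : ℝ[X]} (hD : D ≠ 0)
    (h : ∀ x, D.eval x ≠ 0 → P.eval x = Q.eval x) : P = Q := by
  refine mul_right_cancel₀ hD (Polynomial.funext fun x => ?_)
  by_cases hx : D.eval x = 0
  · simp [hx]
  · simp [h x hx]

/-- The `A_α`-characteristic polynomial of `G⟨e⟩K_{p,q}` for a regular graph `G`, in a form
free of division. -/
theorem charpoly_Aalpha_rEdgeJoin_mul {V : Type*} [Fintype V] [DecidableEq V]
    {G : SimpleGraph V} {r m p q : ℕ} (hp : 1 ≤ p) (hq : 1 ≤ q) (hG : G.IsRegularOfDegree r)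
    (hm : Fintype.card G.edgeSet = m) {α : ℝ} {μ : V → ℝ}
    (hμ : (Aalpha G α).charpoly = ∏ i, (X - C (μ i))) {T U W H S Q : ℝ[X]}
    (hT : T = X - C (α * (2 + p + q))) (hU : U = X - C (α * (m + q)))
    (hW : W = X - C (α * (m + p))) (hH : H = U * W - C ((1 - α) ^ 2 * p * q))
    (hS : S = C (p : ℝ) * W + C (q : ℝ) * U + C (2 * (1 - α) * p * q))
    (hQ : Q = T * (X - C (α * r + r)) - C (2 * (1 - α) ^ 2 * r)) :
    (Aalpha (rEdgeJoin G (completeBipartiteGraph (Fin p) (Fin q))) α).charpoly *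
        (Q * T ^ Fintype.card V) =
      T ^ m * U ^ (p - 1) * W ^ (q - 1) *
        (∏ i, (T * (X - C (α * r + μ i)) - C ((1 - α) * (μ i + r - 2 * α * r)))) *
        (Q * H - C (m * (1 - α) ^ 2) * (X - C (α * r + r)) * S) := by
  have hT0 : T.Monic := hT ▸ monic_X_sub_C _
  have hU0 : U.Monic := hU ▸ monic_X_sub_C _
  have hW0 : W.Monic := hW ▸ monic_X_sub_C _
  have hH0 : H.Monic := by
    rw [hH, hU, hW]
    monicity!
  have hQ0 : Q.Monic := by
    rw [hQ, hT]
    monicity!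
  have hR0 : (T * H - C ((1 - α) ^ 2 * m) * S).Monic := by
    rw [hH, hS, hT, hU, hW]
    monicity!
  refine eq_of_eval_eq_of_eval_ne_zero
    (hT0.mul (hU0.mul (hW0.mul (hH0.mul (hQ0.mul hR0))))).ne_zero fun x hx => ?_
  simp only [eval_mul, mul_ne_zero_iff] at hx
  obtain ⟨hxT, hxU, hxW, hxH, hxQ, hxR⟩ := hx
  have key := det_scalar_sub_Aalpha_rEdgeJoin hp hq hG hm hμ (x := x) (t := T.eval x)
    (u := U.eval x) (v := W.eval x) (h := H.eval x) (s := S.eval x) (g := Q.eval x)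
    (by simp [hT]) (by simp [hU]) (by simp [hW]) (by simp [hH]) (by simp [hS])
    (by simp only [hQ, eval_sub, eval_mul, eval_C, eval_X]; ring)
    hxT hxU hxW hxH (by simpa using hxR) hxQ
  rw [← eval_charpoly] at key
  simp only [eval_mul, eval_pow, eval_prod, eval_sub, eval_C, eval_X, ← sub_sub] at key ⊢
  exact key

theorem eq_natCast_of_charpoly_Aalpha {n r : ℕ} {G : SimpleGraph (Fin (n + 1))}
    (hG : G.IsRegularOfDegree r) {α : ℝ} (hα : α ∈ Set.Icc (0 : ℝ) 1) {μ : Fin (n + 1) → ℝ}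
    (hanti : Antitone μ) (hμ : (Aalpha G α).charpoly = ∏ i, (X - C (μ i))) : μ 0 = r := by
  have hroot (x : ℝ) : (Aalpha G α).charpoly.eval x = 0 ↔ ∃ i, x = μ i := by
    simp [hμ, eval_prod, Finset.prod_eq_zero_iff, sub_eq_zero]
  obtain ⟨i, hi⟩ := (hroot r).1 (charpoly_Aalpha_isRoot G α hG)
  exact le_antisymm (le_of_charpoly_Aalpha_isRoot G α hG hα ((hroot _).2 ⟨0, rfl⟩))
    (hi.le.trans (hanti (Fin.zero_le i)))

theorem sum_eq_of_charpoly_Aalpha {n r : ℕ} {G : SimpleGraph (Fin n)}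
    (hG : G.IsRegularOfDegree r) {α : ℝ} {μ : Fin n → ℝ}
    (hμ : (Aalpha G α).charpoly = ∏ i, (X - C (μ i))) : ∑ i, μ i = n * (α * r) := by
  have h := trace_eq_neg_charpoly_nextCoeff (Aalpha G α)
  rw [hμ, prod_X_sub_C_nextCoeff, neg_neg] at h
  rw [← h]
  simp [trace, Aalpha_apply, hG.degree_eq]

theorem charpoly_Aalpha_rEdgeJoin_mul_prod_eq
    {n m r p q : ℕ} (hp : 1 ≤ p) (hq : 1 ≤ q)
    {G : SimpleGraph (Fin (n + 1))} (hG : G.IsRegularOfDegree r)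
    (hm : Fintype.card G.edgeSet = m) {α : ℝ} (hα : α ∈ Set.Icc (0 : ℝ) 1)
    {μ : Fin (n + 1) → ℝ} (hanti : Antitone μ)
    (hμ : (Aalpha G α).charpoly = ∏ i, (X - C (μ i))) :
    (Aalpha (rEdgeJoin G (completeBipartiteGraph (Fin p) (Fin q))) α).charpoly *
        (X - C (α * (2 + p + q))) ^ (n + 1) =
      (X - C (α * (2 + p + q))) ^ m * (X - C (α * (m + p))) ^ (q - 1) *
        (X - C (α * (m + q))) ^ (p - 1) *
        (∏ i : Fin n,
          (X ^ 2 - C (2 * α + α * r + α * p + α * q + μ i.succ) * X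
            + C (α ^ 2 * r * p + α ^ 2 * r * q + 3 * α * r - r
                  + (3 * α + α * p + α * q - 1) * μ i.succ))) *
        ((X ^ 2 - C (2 * α + α * r + α * p + α * q + r) * X
            + C (α ^ 2 * r * p + α ^ 2 * r * q + 6 * α * r + α * r * p
                  + α * r * q - 2 * r)) *
            (X ^ 2 - C (2 * α * m + α * p + α * q) * X
              + C (α ^ 2 * m ^ 2 + α ^ 2 * m * p + α ^ 2 * m * q + 2 * α * p * q - p * q))
          - C (m * (1 - α) ^ 2) * (X - C (α * r + r)) *
            ((C ((p : ℝ)) + C ((q : ℝ))) * X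
              - C (α * m * p + α * m * q + α * p ^ 2 + α * q ^ 2 + 2 * α * p * q
                    - 2 * (p : ℝ) * q))) := by
  have key := charpoly_Aalpha_rEdgeJoin_mul hp hq hG hm hμ rfl rfl rfl rfl rfl rfl
  have hμ0 := eq_natCast_of_charpoly_Aalpha hG hα hanti hμ
  have hfac (a : ℝ) : (X - C (α * (2 + p + q))) * (X - C (α * r + a)) -
      C ((1 - α) * (a + r - 2 * α * r)) =
      X ^ 2 - C (2 * α + α * r + α * p + α * q + a) * X
        + C (α ^ 2 * r * p + α ^ 2 * r * q + 3 * α * r - r + (3 * α + α * p + α * q - 1) * a) :=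
    Polynomial.funext fun x => by simp; ring
  have hQ : (X - C (α * (2 + p + q))) * (X - C (α * r + r)) - C (2 * (1 - α) ^ 2 * r) =
      X ^ 2 - C (2 * α + α * r + α * p + α * q + r) * X
        + C (α ^ 2 * r * p + α ^ 2 * r * q + 6 * α * r + α * r * p + α * r * q - 2 * r) :=
    Polynomial.funext fun x => by simp; ring
  have hQ0 : X ^ 2 - C (2 * α + α * r + α * p + α * q + r) * X
        + C (α ^ 2 * r * p + α ^ 2 * r * q + 3 * α * r - r + (3 * α + α * p + α * q - 1) * r) =
      X ^ 2 - C (2 * α + α * r + α * p + α * q + r) * X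
        + C (α ^ 2 * r * p + α ^ 2 * r * q + 6 * α * r + α * r * p + α * r * q - 2 * r) := by
    congr 2
    ring
  have hH : (X - C (α * (m + q))) * (X - C (α * (m + p))) - C ((1 - α) ^ 2 * p * q) =
      X ^ 2 - C (2 * α * m + α * p + α * q) * X
        + C (α ^ 2 * m ^ 2 + α ^ 2 * m * p + α ^ 2 * m * q + 2 * α * p * q - p * q) :=
    Polynomial.funext fun x => by simp; ring
  have hS : C (p : ℝ) * (X - C (α * (m + p))) + C (q : ℝ) * (X - C (α * (m + q))) +
      C (2 * (1 - α) * p * q) =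
      (C (p : ℝ) + C (q : ℝ)) * X - C (α * m * p + α * m * q + α * p ^ 2 + α * q ^ 2
        + 2 * α * p * q - 2 * (p : ℝ) * q) :=
    Polynomial.funext fun x => by simp; ring
  have hne : (X ^ 2 - C (2 * α + α * r + α * p + α * q + r) * X
      + C (α ^ 2 * r * p + α ^ 2 * r * q + 6 * α * r + α * r * p + α * r * q - 2 * r) :
      ℝ[X]) ≠ 0 :=
    Monic.ne_zero (by monicity!)
  simp only [hfac, hQ, hH, hS, Fin.prod_univ_succ, hμ0, hQ0, Fintype.card_fin] at key
  refine mul_left_cancel₀ hne ?_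
  linear_combination key

/-- Corollary: the `A_α`-spectrum (as the factorization of the `A_α`-characteristic
polynomial) of the `R`-edge join `G₁⟨e⟩K_{p,q}` of an `r₁`-regular graph `G₁` and the
complete bipartite graph `K_{p,q}`, in the cases `r₁ = 1` and `r₁ ≥ 2`. -/
theorem Aalpha_spectrum_rEdgeJoin_completeBipartite
    {n₁ m₁ r₁ p q : ℕ} (hp : 1 ≤ p) (hq : 1 ≤ q)
    (G₁ : SimpleGraph (Fin n₁))
    (hconn₁ : G₁.Connected) (hreg₁ : G₁.IsRegularOfDegree r₁)
    (hm : Fintype.card G₁.edgeSet = m₁)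
    (α : ℝ) (hα : α ∈ Set.Icc (0 : ℝ) 1)
    (μ₁ : Fin n₁ → ℝ) (hμ₁ : Antitone μ₁)
    (hμ₁ch : (Aalpha G₁ α).charpoly = ∏ i, (X - C (μ₁ i))) :
    (r₁ = 1 →
      (Aalpha (rEdgeJoin G₁ (completeBipartiteGraph (Fin p) (Fin q))) α).charpoly =
        (X - C (3 * α - 1)) *
        (X - C (α * (1 + p))) ^ (q - 1) *
        (X - C (α * (1 + q))) ^ (p - 1) *
        ((X ^ 2 - C (2 * α + α * p + α * q + α + 1) * X
            + C (α ^ 2 * p + α ^ 2 * q + 6 * α + α * p + α * q - 2)) *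
            (X ^ 2 - C (2 * α + α * p + α * q) * X
              + C (α ^ 2 + α ^ 2 * p + α ^ 2 * q + 2 * α * p * q - p * q))
          - C ((1 - α) ^ 2) * (X - C (α + 1)) *
            ((C ((p : ℝ)) + C ((q : ℝ))) * X
              - C (α * p + α * q + α * p ^ 2 + α * q ^ 2 + 2 * α * p * q
                    - 2 * (p : ℝ) * q)))) ∧
    (2 ≤ r₁ →
      (Aalpha (rEdgeJoin G₁ (completeBipartiteGraph (Fin p) (Fin q))) α).charpoly =
        (X - C (α * (2 + p + q))) ^ (m₁ - n₁) *
        (X - C (α * (m₁ + p))) ^ (q - 1) *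
        (X - C (α * (m₁ + q))) ^ (p - 1) *
        (∏ i ∈ Finset.univ.filter (fun i : Fin n₁ => i.val ≠ 0),
          (X ^ 2 - C (2 * α + α * r₁ + α * p + α * q + μ₁ i) * X
            + C (α ^ 2 * r₁ * p + α ^ 2 * r₁ * q + 3 * α * r₁ - r₁
                  + (3 * α + α * p + α * q - 1) * μ₁ i))) *
        ((X ^ 2 - C (2 * α + α * r₁ + α * p + α * q + r₁) * X
            + C (α ^ 2 * r₁ * p + α ^ 2 * r₁ * q + 6 * α * r₁ + α * r₁ * p
                  + α * r₁ * q - 2 * r₁)) *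
            (X ^ 2 - C (2 * α * m₁ + α * p + α * q) * X
              + C (α ^ 2 * m₁ ^ 2 + α ^ 2 * m₁ * p + α ^ 2 * m₁ * q + 2 * α * p * q - p * q))
          - C (m₁ * (1 - α) ^ 2) * (X - C (α * r₁ + r₁)) *
            ((C ((p : ℝ)) + C ((q : ℝ))) * X
              - C (α * m₁ * p + α * m₁ * q + α * p ^ 2 + α * q ^ 2 + 2 * α * p * q
                    - 2 * (p : ℝ) * q)))) := by
  obtain ⟨k, rfl⟩ : ∃ k, n₁ = k + 1 :=
    Nat.exists_eq_succ_of_ne_zero (Fin.pos_iff_nonempty.2 hconn₁.nonempty).ne'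
  have key := charpoly_Aalpha_rEdgeJoin_mul_prod_eq hp hq hreg₁ hm hα hμ₁ hμ₁ch
  have hcard := hreg₁.card_mul_eq_two_mul_card_edgeSet
  rw [hm, Fintype.card_fin] at hcard
  have hT := (monic_X_sub_C (α * (2 + p + q))).ne_zero
  constructor
  · rintro rfl
    have hle := hconn₁.card_vert_le_card_edgeSet_add_one
    rw [Nat.card_eq_fintype_card, Nat.card_eq_fintype_card, hm, Fintype.card_fin] at hle
    obtain rfl : k = 1 := by omega
    obtain rfl : m₁ = 1 := by omega
    have hμ0 := eq_natCast_of_charpoly_Aalpha hreg₁ hα hμ₁ hμ₁ch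
    have hsum := sum_eq_of_charpoly_Aalpha hreg₁ hμ₁ch
    rw [Fin.sum_univ_two, hμ0] at hsum
    have hμ1 : μ₁ 1 = 2 * α - 1 := by
      push_cast at hsum
      linear_combination hsum
    have hfac : X ^ 2 - C (2 * α + α * (1 : ℕ) + α * p + α * q + (2 * α - 1)) * X
          + C (α ^ 2 * (1 : ℕ) * p + α ^ 2 * (1 : ℕ) * q + 3 * α * (1 : ℕ) - (1 : ℕ)
            + (3 * α + α * p + α * q - 1) * (2 * α - 1)) =
        (X - C (α * (2 + p + q))) * (X - C (3 * α - 1)) :=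
      Polynomial.funext fun x => by simp; ring
    rw [Fin.prod_univ_one, Fin.succ_zero_eq_one, hμ1, hfac] at key
    simp only [Nat.cast_one, mul_one, one_mul, one_pow] at key
    refine mul_right_cancel₀ (pow_ne_zero 2 hT) (key.trans ?_)
    ring_nf
  · intro hr
    have hle : k + 1 ≤ m₁ := by nlinarith
    have hprod (f : Fin (k + 1) → ℝ[X]) :
        ∏ i ∈ Finset.univ.filter (fun i : Fin (k + 1) => i.val ≠ 0), f i =
          ∏ i : Fin k, f i.succ := by
      simp [Finset.prod_filter, Fin.prod_univ_succ]
    rw [hprod]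
    refine mul_right_cancel₀ (pow_ne_zero (k + 1) hT) (key.trans ?_)
    rw [← pow_sub_mul_pow (X - C (α * (2 + p + q))) hle]
    ring
end
end

section
/- Fix α ∈ [0,1]. (1) If G₁ and G₂ are A_α-cospectral regular graphs and H is an arbitrary graph, then the R-edge joins G₁⟨e⟩H and G₂⟨e⟩H are A_α-cospectral. (2) If H₁ and H₂ are A_α-cospectral graphs with equal A_α-coronals Γ_{A_α(H₁)}(x) = Γ_{A_α(H₂)}(x), and G is a regular graph, then G⟨e⟩H₁ and G⟨e⟩H₂ are A_α-cospectral. -/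
open Matrix Polynomial
open scoped Classical

noncomputable section

/-- The `M`-coronal `Γ_M(x) = 1ᵀ (xI − M)⁻¹ 1`, i.e. the sum of the entries of
`(xI − M)⁻¹`. -/
def coronal {n : Type*} [Fintype n] (M : Matrix n n ℝ) (x : ℝ) : ℝ :=
  ∑ i, ∑ j, (x • (1 : Matrix n n ℝ) - M)⁻¹ i j

theorem det_fromBlocks_smul_one₂₂ {m n : Type*} [Fintype m] [Fintype n] [DecidableEq m]
    [DecidableEq n] {c : ℝ} (hc : c ≠ 0) (A : Matrix m m ℝ) (B : Matrix m n ℝ)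
    (C : Matrix n m ℝ) :
    (fromBlocks A B C (c • (1 : Matrix n n ℝ))).det
      = c ^ Fintype.card n * (A - c⁻¹ • (B * C)).det := by
  let _ : Invertible (c • (1 : Matrix n n ℝ)) :=
    ⟨c⁻¹ • 1, by simp [smul_smul, hc], by simp [smul_smul, hc]⟩
  have hinv : ⅟(c • (1 : Matrix n n ℝ)) = c⁻¹ • 1 := rfl
  rw [det_fromBlocks₂₂, hinv, det_smul, det_one, mul_one]
  simp

theorem det_fromBlocks_const_offDiag {m n : Type*} [Fintype m] [Fintype n] [DecidableEq m]
    [DecidableEq n] {p : ℝ} (hp : p ≠ 0) (t : ℝ) (P : Matrix m m ℝ) (Q : Matrix n n ℝ)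
    (hP : ∀ j, ∑ i, P i j = p) :
    (fromBlocks P (of fun _ _ => -t) (of fun _ _ => -t) Q).det
      = P.det * (Q - of fun _ _ => t ^ 2 * Fintype.card m / p).det := by
  have hmul : fromBlocks (1 : Matrix m m ℝ) 0 (of fun _ _ => t / p) (1 : Matrix n n ℝ)
      * fromBlocks P (of fun _ _ => -t) (of fun _ _ => -t) Q
      = fromBlocks P (of fun _ _ => -t) 0 (Q - of fun _ _ => t ^ 2 * Fintype.card m / p) := by
    rw [fromBlocks_multiply]
    congr 1
    · simp
    · simp
    · ext i j
      simp [mul_apply, ← Finset.mul_sum, hP, hp]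
    · ext i j
      simp [mul_apply]
      ring
  have hdet := congrArg det hmul
  rwa [det_mul, det_fromBlocks_zero₁₂, det_fromBlocks_zero₂₁, det_one, det_one, one_mul,
    one_mul] at hdet

theorem det_smul_one_sub_smul {n : Type*} [Fintype n] [DecidableEq n] (M : Matrix n n ℝ)
    (u : ℝ) {s : ℝ} (hs : s ≠ 0) :
    (u • (1 : Matrix n n ℝ) - s • M).det = s ^ Fintype.card n * M.charpoly.eval (u / s) := by
  rw [eval_charpoly, ← det_smul]
  congr 1
  rw [smul_sub, scalar_apply, ← smul_one_eq_diagonal, smul_smul, mul_div_cancel₀ _ hs]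

theorem det_smul_one_sub_sub_const {n : Type*} [Fintype n] [DecidableEq n] (M : Matrix n n ℝ)
    (y θ : ℝ) (hy : M.charpoly.eval y ≠ 0) :
    (y • (1 : Matrix n n ℝ) - M - of fun _ _ => θ).det
      = M.charpoly.eval y * (1 - θ * coronal M y) := by
  have hev : M.charpoly.eval y = (y • (1 : Matrix n n ℝ) - M).det := by
    rw [eval_charpoly, scalar_apply, ← smul_one_eq_diagonal]
  rw [hev] at hy ⊢
  have hsum : y • (1 : Matrix n n ℝ) - M - (of fun _ _ => θ)
      = y • (1 : Matrix n n ℝ) - M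
        + replicateCol Unit (fun _ : n => -θ) * replicateRow Unit (fun _ : n => (1 : ℝ)) := by
    ext i j
    simp [mul_apply, sub_eq_add_neg]
  rw [hsum, det_add_replicateCol_mul_replicateRow hy.isUnit, det_unique (n := Unit), coronal]
  have hdec : ‹DecidableEq n› = fun a b => Classical.propDecidable (a = b) :=
    Subsingleton.elim _ _
  subst hdec
  congr 1
  simp only [Matrix.add_apply, one_apply_eq, mul_apply, replicateRow_apply, replicateCol_apply,
    one_mul]
  rw [← Finset.sum_mul, Finset.sum_comm]
  ring

theorem sum_adjMatrix_row {V : Type*} [Fintype V] (G : SimpleGraph V) [DecidableRel G.Adj]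
    (v : V) : ∑ w, G.adjMatrix ℝ v w = G.degree v := by
  simpa [mulVec, dotProduct] using
    SimpleGraph.adjMatrix_mulVec_const_apply (G := G) (a := (1 : ℝ)) (v := v)

theorem Aalpha_apply_self {V : Type*} [Fintype V] (G : SimpleGraph V) (α : ℝ) (v : V) :
    Aalpha G α v v = α * G.degree v := by
  simp [Aalpha]

theorem Aalpha_apply_ne {V : Type*} [Fintype V] (G : SimpleGraph V) (α : ℝ) {v w : V}
    (h : v ≠ w) : Aalpha G α v w = if G.Adj v w then 1 - α else 0 := by
  simp [Aalpha, h]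

theorem Aalpha_of_isRegularOfDegree {V : Type*} [Fintype V] [DecidableEq V]
    {G : SimpleGraph V} {r : ℕ}
    (hG : ∀ v, G.degree v = r) (α : ℝ) :
    Aalpha G α = (α * r) • (1 : Matrix V V ℝ) + (1 - α) • G.adjMatrix ℝ := by
  ext i j
  by_cases hij : i = j <;> simp [Aalpha, hG, hij]

theorem sum_Aalpha_row {V : Type*} [Fintype V]
    {G : SimpleGraph V} {r : ℕ} (hG : ∀ v, G.degree v = r) (α : ℝ) (v : V) :
    ∑ w, Aalpha G α v w = r := by
  rw [Aalpha_of_isRegularOfDegree hG]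
  simp only [Matrix.add_apply, Matrix.smul_apply, smul_eq_mul, Finset.sum_add_distrib,
    ← Finset.mul_sum, sum_adjMatrix_row, hG, one_apply, Finset.sum_ite_eq, Finset.mem_univ, if_true]
  ring

theorem Aalpha_isSymm {V : Type*} [Fintype V] (G : SimpleGraph V) (α : ℝ) :
    (Aalpha G α).IsSymm := by
  simp [IsSymm, Aalpha]

theorem isRoot_charpoly_Aalpha {V : Type*} [Fintype V] [DecidableEq V] [Nonempty V]
    {G : SimpleGraph V} {r : ℕ} (hG : ∀ v, G.degree v = r) (α : ℝ) :
    (Aalpha G α).charpoly.eval (r : ℝ) = 0 := by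
  rw [eval_charpoly]
  refine exists_mulVec_eq_zero_iff.mp ⟨fun _ => 1, ?_, ?_⟩
  · exact fun h => one_ne_zero (congrFun h (Classical.arbitrary V))
  · ext v
    simp only [mulVec, dotProduct, Matrix.sub_apply, scalar_apply, mul_one, Pi.zero_apply,
      Finset.sum_sub_distrib, sum_Aalpha_row hG, diagonal_apply, Finset.sum_ite_eq,
      Finset.mem_univ, if_true, sub_self]

theorem eval_charpoly_Aalpha_ne_zero {V : Type*} [Fintype V] [DecidableEq V]
    {G : SimpleGraph V} {r : ℕ} (hG : ∀ v, G.degree v = r) {α : ℝ}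
    (hα : α ∈ Set.Icc (0 : ℝ) 1) {μ : ℝ} (hμ : r < μ) :
    (Aalpha G α).charpoly.eval μ ≠ 0 := by
  rw [eval_charpoly]
  refine det_ne_zero_of_sum_row_lt_diag fun v => ?_
  have hr : (0 : ℝ) ≤ r := r.cast_nonneg
  have hdiag : Aalpha G α v v = α * r := by rw [Aalpha_apply_self, hG]
  have hoff : ∑ w ∈ Finset.univ.erase v, ‖(scalar V μ - Aalpha G α) v w‖
      = ∑ w ∈ Finset.univ.erase v, Aalpha G α v w := by
    refine Finset.sum_congr rfl fun w hw => ?_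
    have hvw : v ≠ w := (Finset.ne_of_mem_erase hw).symm
    have h1 : 0 ≤ Aalpha G α v w := by
      have h2 : 0 ≤ 1 - α := sub_nonneg.mpr hα.2
      rw [Aalpha_apply_ne G α hvw]
      split_ifs <;> simp [h2]
    simp [diagonal_apply_ne _ hvw, abs_of_nonneg h1]
  rw [hoff, Finset.sum_erase_eq_sub (Finset.mem_univ v), sum_Aalpha_row hG, hdiag]
  simp only [Matrix.sub_apply, scalar_apply, diagonal_apply_eq, hdiag]
  exact lt_of_lt_of_le (by linarith [hdiag]) (le_abs_self _)

theorem degree_eq_of_charpoly_Aalpha_eq {V W : Type*} [Fintype V] [DecidableEq V] [Nonempty V]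
    [Fintype W] [DecidableEq W] [Nonempty W] {G : SimpleGraph V} {H : SimpleGraph W} {r s : ℕ}
    (hG : ∀ v, G.degree v = r) (hH : ∀ v, H.degree v = s) {α : ℝ}
    (hα : α ∈ Set.Icc (0 : ℝ) 1)
    (h : (Aalpha G α).charpoly = (Aalpha H α).charpoly) : r = s := by
  refine le_antisymm (not_lt.mp fun hlt => ?_) (not_lt.mp fun hlt => ?_)
  · exact eval_charpoly_Aalpha_ne_zero hH hα (Nat.cast_lt.mpr hlt)
      (h ▸ isRoot_charpoly_Aalpha hG α)
  · exact eval_charpoly_Aalpha_ne_zero hG hα (Nat.cast_lt.mpr hlt)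
      (h ▸ isRoot_charpoly_Aalpha hH α)

section rEdgeJoin

variable {V W : Type*} (G : SimpleGraph V) (H : SimpleGraph W)

theorem rEdgeJoin_adj_inl_inl_s15 (v w : V) :
    (rEdgeJoin G H).Adj (Sum.inl v) (Sum.inl w) ↔ G.Adj v w := by
  simp only [rEdgeJoin, SimpleGraph.fromRel_adj, G.adj_comm w v, or_self, ne_eq, Sum.inl.injEq]
  exact and_iff_right_of_imp G.ne_of_adj

theorem rEdgeJoin_adj_inl_edge_s15 (v : V) (e : G.edgeSet) :
    (rEdgeJoin G H).Adj (Sum.inl v) (Sum.inr (Sum.inl e)) ↔ v ∈ (e : Sym2 V) := by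
  simp [rEdgeJoin]

theorem rEdgeJoin_not_adj_inl_inr_s15 (v : V) (w : W) :
    ¬ (rEdgeJoin G H).Adj (Sum.inl v) (Sum.inr (Sum.inr w)) := by
  simp [rEdgeJoin]

theorem rEdgeJoin_not_adj_edge_edge_s15 (e f : G.edgeSet) :
    ¬ (rEdgeJoin G H).Adj (Sum.inr (Sum.inl e)) (Sum.inr (Sum.inl f)) := by
  simp [rEdgeJoin]

theorem rEdgeJoin_adj_edge_inr_s15 (e : G.edgeSet) (w : W) :
    (rEdgeJoin G H).Adj (Sum.inr (Sum.inl e)) (Sum.inr (Sum.inr w)) := by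
  simp [rEdgeJoin]

theorem rEdgeJoin_adj_inr_inr_s15 (v w : W) :
    (rEdgeJoin G H).Adj (Sum.inr (Sum.inr v)) (Sum.inr (Sum.inr w)) ↔ H.Adj v w := by
  simp only [rEdgeJoin, SimpleGraph.fromRel_adj, H.adj_comm w v, or_self, ne_eq, Sum.inr.injEq]
  exact and_iff_right_of_imp H.ne_of_adj

theorem rEdgeJoin_adj_edge_inl_s15 (v : V) (e : G.edgeSet) :
    (rEdgeJoin G H).Adj (Sum.inr (Sum.inl e)) (Sum.inl v) ↔ v ∈ (e : Sym2 V) := by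
  rw [SimpleGraph.adj_comm, rEdgeJoin_adj_inl_edge_s15]

theorem rEdgeJoin_not_adj_inr_inl_s15 (v : V) (w : W) :
    ¬ (rEdgeJoin G H).Adj (Sum.inr (Sum.inr w)) (Sum.inl v) := by
  rw [SimpleGraph.adj_comm]
  exact rEdgeJoin_not_adj_inl_inr_s15 G H v w

theorem rEdgeJoin_adj_inr_edge_s15 (e : G.edgeSet) (w : W) :
    (rEdgeJoin G H).Adj (Sum.inr (Sum.inr w)) (Sum.inr (Sum.inl e)) :=
  (rEdgeJoin_adj_edge_inr_s15 G H e w).symm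

/-- The vertex-edge incidence matrix with columns indexed by the edges only. -/
def edgeIncMatrix : Matrix V G.edgeSet ℝ :=
  of fun v e => if v ∈ (e : Sym2 V) then 1 else 0

theorem edgeIncMatrix_eq (v : V) (e : G.edgeSet) :
    edgeIncMatrix G v e = G.incMatrix ℝ v e := by
  simp [edgeIncMatrix, SimpleGraph.incMatrix_apply', SimpleGraph.incidenceSet]

theorem sum_edgeIncMatrix_col [Fintype V] (e : G.edgeSet) : ∑ v, edgeIncMatrix G v e = 2 := by
  simp only [edgeIncMatrix_eq]
  exact G.sum_incMatrix_apply_of_mem_edgeSet e.2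

variable [Fintype V] [Fintype W] [Fintype G.edgeSet]

theorem sum_edgeIncMatrix_row (v : V) : ∑ e, edgeIncMatrix G v e = G.degree v := by
  rw [← SimpleGraph.sum_incMatrix_apply]
  refine Fintype.sum_of_injective Subtype.val Subtype.val_injective _ _ (fun e he => ?_)
    (edgeIncMatrix_eq G v)
  exact G.incMatrix_of_notMem_incidenceSet fun h => he ⟨⟨e, h.1⟩, rfl⟩

theorem edgeIncMatrix_mul_transpose :
    edgeIncMatrix G * (edgeIncMatrix G)ᵀ
      = diagonal (fun v => (G.degree v : ℝ)) + G.adjMatrix ℝ := by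
  have h : edgeIncMatrix G * (edgeIncMatrix G)ᵀ
      = G.incMatrix ℝ * (G.incMatrix ℝ)ᵀ := by
    ext v w
    simp only [mul_apply, transpose_apply]
    refine Fintype.sum_of_injective Subtype.val Subtype.val_injective _ _ (fun e he => ?_)
      fun e => by rw [edgeIncMatrix_eq, edgeIncMatrix_eq]
    rw [G.incMatrix_of_notMem_incidenceSet fun h => he ⟨⟨e, h.1⟩, rfl⟩, zero_mul]
  rw [h, SimpleGraph.incMatrix_mul_transpose]
  ext v w
  by_cases hvw : v = w <;> simp [hvw, SimpleGraph.adjMatrix_apply]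

theorem degree_rEdgeJoin_inl (v : V) :
    ((rEdgeJoin G H).degree (Sum.inl v) : ℝ) = 2 * G.degree v := by
  rw [← sum_adjMatrix_row, Fintype.sum_sum_type, Fintype.sum_sum_type]
  simp only [SimpleGraph.adjMatrix_apply, rEdgeJoin_adj_inl_inl_s15, rEdgeJoin_adj_inl_edge_s15,
    rEdgeJoin_not_adj_inl_inr_s15]
  have h₁ := sum_adjMatrix_row G v
  have h₂ := sum_edgeIncMatrix_row G v
  simp only [SimpleGraph.adjMatrix_apply, edgeIncMatrix, of_apply] at h₁ h₂
  rw [h₁, h₂]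
  simp
  ring

theorem degree_rEdgeJoin_edge (e : G.edgeSet) :
    ((rEdgeJoin G H).degree (Sum.inr (Sum.inl e)) : ℝ) = 2 + Fintype.card W := by
  rw [← sum_adjMatrix_row, Fintype.sum_sum_type, Fintype.sum_sum_type]
  simp only [SimpleGraph.adjMatrix_apply, rEdgeJoin_adj_edge_inl_s15, rEdgeJoin_not_adj_edge_edge_s15,
    rEdgeJoin_adj_edge_inr_s15]
  have h := sum_edgeIncMatrix_col G e
  simp only [edgeIncMatrix, of_apply] at h
  rw [h]
  simp

theorem degree_rEdgeJoin_inr (w : W) :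
    ((rEdgeJoin G H).degree (Sum.inr (Sum.inr w)) : ℝ)
      = H.degree w + Fintype.card G.edgeSet := by
  rw [← sum_adjMatrix_row, Fintype.sum_sum_type, Fintype.sum_sum_type]
  simp only [SimpleGraph.adjMatrix_apply, rEdgeJoin_not_adj_inr_inl_s15, rEdgeJoin_adj_inr_edge_s15,
    rEdgeJoin_adj_inr_inr_s15]
  have h := sum_adjMatrix_row H w
  simp only [SimpleGraph.adjMatrix_apply] at h
  rw [h]
  simp
  ring

variable {G}

theorem eval_charpoly_rEdgeJoin [DecidableEq V] [DecidableEq W]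
    [DecidableEq (V ⊕ (G.edgeSet ⊕ W))] {r : ℕ} (hG : ∀ v, G.degree v = r) {α x c s p : ℝ}
    (hc : c = x - α * (2 + Fintype.card W)) (hc₀ : c ≠ 0)
    (hs : s = 1 + (1 - α) / c)
    (hp : p = x - 2 * r * α - (1 - α) ^ 2 * r / c - s * (1 - α) * r) (hp₀ : p ≠ 0) :
    (Aalpha (rEdgeJoin G H) α).charpoly.eval x
      = c ^ Fintype.card G.edgeSet
        * (((p + s * r) • (1 : Matrix V V ℝ) - s • Aalpha G α).det
        * ((x - α * Fintype.card G.edgeSet) • (1 : Matrix W W ℝ) - Aalpha H α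
          - of fun _ _ => (1 - α) ^ 2 * Fintype.card G.edgeSet / c
            + ((1 - α) ^ 2 * r / c) ^ 2 * Fintype.card V / p).det) := by
  set m : ℝ := (Fintype.card G.edgeSet : ℝ) with hm_def
  have hm : (G.edgeSet.ncard : ℝ) = m := by simp [hm_def]
  let e : (V ⊕ W) ⊕ G.edgeSet ≃ V ⊕ (G.edgeSet ⊕ W) :=
    (Equiv.sumAssoc V W G.edgeSet).trans
      (Equiv.sumCongr (Equiv.refl V) (Equiv.sumComm W G.edgeSet))
  let C : Matrix (V ⊕ W) G.edgeSet ℝ :=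
    fromRows (-(1 - α) • edgeIncMatrix G) (of fun _ _ => -(1 - α))
  have hblock : (scalar (V ⊕ (G.edgeSet ⊕ W)) x - Aalpha (rEdgeJoin G H) α).submatrix e e
      = fromBlocks
          (fromBlocks ((x - 2 * r * α) • (1 : Matrix V V ℝ) - (1 - α) • G.adjMatrix ℝ) 0 0
            ((x - α * m) • (1 : Matrix W W ℝ) - Aalpha H α))
          C Cᵀ (c • 1) := by
    ext ((v | w) | f) ((v' | w') | f')
    · by_cases h : v = v'
      · subst h
        simp [e, Aalpha_apply_self, degree_rEdgeJoin_inl, hG]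
        ring
      · simp [e, Aalpha_apply_ne, h, rEdgeJoin_adj_inl_inl_s15]
    · simp [e, Aalpha_apply_ne, rEdgeJoin_not_adj_inl_inr_s15]
    · simp [e, C, Aalpha_apply_ne, rEdgeJoin_adj_inl_edge_s15, edgeIncMatrix]
      split_ifs <;> ring
    · simp [e, Aalpha_apply_ne, rEdgeJoin_not_adj_inr_inl_s15]
    · by_cases h : w = w'
      · subst h
        simp [e, Aalpha_apply_self, degree_rEdgeJoin_inr, hm]
        ring
      · simp [e, Aalpha_apply_ne, h, rEdgeJoin_adj_inr_inr_s15]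
    · simp [e, C, Aalpha_apply_ne, rEdgeJoin_adj_inr_edge_s15]
    · simp [e, C, Aalpha_apply_ne, rEdgeJoin_adj_edge_inl_s15, edgeIncMatrix]
      split_ifs <;> ring
    · simp [e, C, Aalpha_apply_ne, rEdgeJoin_adj_edge_inr_s15]
    · by_cases h : f = f'
      · subst h
        simp [e, Aalpha_apply_self, degree_rEdgeJoin_edge, hc]
      · simp [e, Aalpha_apply_ne, h, rEdgeJoin_not_adj_edge_edge_s15]
  have hschur :
      fromBlocks ((x - 2 * r * α) • (1 : Matrix V V ℝ) - (1 - α) • G.adjMatrix ℝ) 0 0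
            ((x - α * m) • (1 : Matrix W W ℝ) - Aalpha H α) - c⁻¹ • (C * Cᵀ)
      = fromBlocks ((p + s * r) • (1 : Matrix V V ℝ) - s • Aalpha G α)
          (of fun _ _ => -((1 - α) ^ 2 * r / c)) (of fun _ _ => -((1 - α) ^ 2 * r / c))
          ((x - α * m) • (1 : Matrix W W ℝ) - Aalpha H α
            - of fun _ _ => (1 - α) ^ 2 * m / c) := by
    have hB := edgeIncMatrix_mul_transpose G
    have hrow (v : V) := sum_edgeIncMatrix_row G v
    ext (v | w) (v' | w')
    · have hvv := congrFun (congrFun hB v) v'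
      simp only [mul_apply, transpose_apply] at hvv
      have hCC : (C * Cᵀ) (Sum.inl v) (Sum.inl v')
          = (1 - α) ^ 2 * ∑ f, edgeIncMatrix G v f * edgeIncMatrix G v' f := by
        simp only [C, mul_apply, transpose_apply, fromRows_apply_inl, Matrix.smul_apply,
          smul_eq_mul, Finset.mul_sum]
        exact Finset.sum_congr rfl fun _ _ => by ring
      simp only [Matrix.sub_apply, Matrix.smul_apply, hCC, hvv, fromBlocks_apply₁₁,
        Aalpha_of_isRegularOfDegree hG, Matrix.add_apply, smul_eq_mul, hG]
      rw [hp, hs]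
      by_cases h : v = v'
      · subst h
        simp
        field_simp
        ring
      · by_cases hadj : G.Adj v v'
        · simp [h, hadj]
          field_simp
          ring
        · simp [h, hadj]
    · have hCC : (C * Cᵀ) (Sum.inl v) (Sum.inr w') = (1 - α) ^ 2 * r := by
        simp only [C, mul_apply, transpose_apply, fromRows_apply_inl, fromRows_apply_inr,
          Matrix.smul_apply, smul_eq_mul, of_apply, ← Finset.sum_mul, ← Finset.mul_sum, hrow, hG]
        ring
      simp [hCC]
      ring
    · have hCC : (C * Cᵀ) (Sum.inr w) (Sum.inl v') = (1 - α) ^ 2 * r := by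
        simp only [C, mul_apply, transpose_apply, fromRows_apply_inl, fromRows_apply_inr,
          Matrix.smul_apply, smul_eq_mul, of_apply, ← Finset.mul_sum, hrow, hG]
        ring
      simp [hCC]
      ring
    · have hCC : (C * Cᵀ) (Sum.inr w) (Sum.inr w') = (1 - α) ^ 2 * m := by
        simp [C, mul_apply, hm]
        ring
      simp [hCC]
      ring
  have hcol (v : V) :
      ∑ w, ((p + s * r) • (1 : Matrix V V ℝ) - s • Aalpha G α) w v = p := by
    simp [one_apply, Finset.sum_sub_distrib, ← Finset.mul_sum,
      fun w => (Aalpha_isSymm G α).apply v w, sum_Aalpha_row hG]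
  rw [eval_charpoly, ← det_submatrix_equiv_self e, hblock, det_fromBlocks_smul_one₂₂ hc₀, hschur,
    det_fromBlocks_const_offDiag hp₀ _ _ _ hcol]
  congr 3
  ext w w'
  simp
  ring

end rEdgeJoin

theorem schur_constants_pos {α x k r c s p : ℝ} (hα : α ∈ Set.Icc (0 : ℝ) 1) (hk : 0 ≤ k)
    (hr : 0 ≤ r) (hx : 3 + k + 2 * r < x) (hc : c = x - α * (2 + k)) (hs : s = 1 + (1 - α) / c)
    (hp : p = x - 2 * r * α - (1 - α) ^ 2 * r / c - s * (1 - α) * r) :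
    0 < c ∧ 0 < s ∧ 0 < p := by
  obtain ⟨hα₀, hα₁⟩ := hα
  have hc₁ : 1 + 2 * r < c := by nlinarith
  have hc₀ : 0 < c := by linarith
  have hs₀ : 0 < s := by
    have := div_nonneg (sub_nonneg.mpr hα₁) hc₀.le
    linarith
  refine ⟨hc₀, hs₀, ?_⟩
  have hβ : (1 - α) ^ 2 ≤ 1 := by nlinarith
  have hpc : p = x - r * (1 + α) - (1 - α) ^ 2 * (2 * r / c) := by
    rw [hp, hs]
    field_simp
    ring
  have hfrac : 2 * r / c ≤ 1 := (div_le_one hc₀).mpr (by linarith)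
  have hfrac₀ : 0 ≤ 2 * r / c := by positivity
  rw [hpc]
  nlinarith [mul_le_one₀ hβ hfrac₀ hfrac, mul_nonneg hr (sub_nonneg.mpr hα₁)]

theorem two_mul_card_edgeSet {V : Type*} [Fintype V] (G : SimpleGraph V) [Fintype G.edgeSet]
    {r : ℕ} (hG : ∀ v, G.degree v = r) :
    2 * Fintype.card G.edgeSet = Fintype.card V * r := by
  have h := G.sum_degrees_eq_twice_card_edges
  simp only [hG, Finset.sum_const, Finset.card_univ, smul_eq_mul] at h
  rw [h, ← SimpleGraph.edgeFinset_card]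
  congr!

/-- Corollary: constructions of `A_α`-cospectral pairs from `R`-edge joins.
(1) Joining two `A_α`-cospectral regular graphs with the same arbitrary graph `H` gives
`A_α`-cospectral graphs.  (2) Joining a regular graph `G` with two `A_α`-cospectral
graphs having equal `A_α`-coronals gives `A_α`-cospectral graphs. -/
theorem Aalpha_cospectral_rEdgeJoin
    (α : ℝ) (hα : α ∈ Set.Icc (0 : ℝ) 1) :
    (∀ (n₁ n₂ k r₁ r₂ : ℕ) (G₁ : SimpleGraph (Fin n₁)) (G₂ : SimpleGraph (Fin n₂))
        (H : SimpleGraph (Fin k)),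
      G₁.IsRegularOfDegree r₁ → G₂.IsRegularOfDegree r₂ →
      (Aalpha G₁ α).charpoly = (Aalpha G₂ α).charpoly →
      (Aalpha (rEdgeJoin G₁ H) α).charpoly =
        (Aalpha (rEdgeJoin G₂ H) α).charpoly) ∧
    (∀ (n k₁ k₂ r : ℕ) (G : SimpleGraph (Fin n)) (H₁ : SimpleGraph (Fin k₁))
        (H₂ : SimpleGraph (Fin k₂)),
      G.IsRegularOfDegree r →
      (Aalpha H₁ α).charpoly = (Aalpha H₂ α).charpoly →
      (∀ x : ℝ, coronal (Aalpha H₁ α) x = coronal (Aalpha H₂ α) x) →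
      (Aalpha (rEdgeJoin G H₁) α).charpoly =
        (Aalpha (rEdgeJoin G H₂) α).charpoly) := by
  have card_eq {n₁ n₂ : ℕ} {M₁ : Matrix (Fin n₁) (Fin n₁) ℝ} {M₂ : Matrix (Fin n₂) (Fin n₂) ℝ}
      (h : M₁.charpoly = M₂.charpoly) : n₁ = n₂ := by
    simpa using congrArg natDegree h
  constructor
  · intro n₁ n₂ k r₁ r₂ G₁ G₂ H hG₁ hG₂ hchar
    obtain rfl := card_eq hchar
    rcases n₁.eq_zero_or_pos with rfl | hn
    · obtain rfl : G₁ = G₂ := SimpleGraph.ext (funext fun v => v.elim0)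
      rfl
    have : Nonempty (Fin n₁) := ⟨⟨0, hn⟩⟩
    have hd₁ (v : Fin n₁) : G₁.degree v = r₁ := by convert hG₁ v
    have hd₂ (v : Fin n₁) : G₂.degree v = r₂ := by convert hG₂ v
    obtain rfl := degree_eq_of_charpoly_Aalpha_eq hd₁ hd₂ hα hchar
    have hm : Fintype.card G₁.edgeSet = Fintype.card G₂.edgeSet := by
      have h₁ := two_mul_card_edgeSet G₁ hd₁
      have h₂ := two_mul_card_edgeSet G₂ hd₂
      omega
    refine eq_of_infinite_eval_eq _ _
      ((Set.Ioi_infinite (3 + (Fintype.card (Fin k) : ℝ) + 2 * r₁)).mono fun x hx => ?_)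
    obtain ⟨hc, hs, hp⟩ :=
      schur_constants_pos hα (Nat.cast_nonneg _) r₁.cast_nonneg hx rfl rfl rfl
    rw [Set.mem_ofPred_eq, eval_charpoly_rEdgeJoin H hd₁ rfl hc.ne' rfl rfl hp.ne',
      eval_charpoly_rEdgeJoin H hd₂ rfl hc.ne' rfl rfl hp.ne',
      det_smul_one_sub_smul _ _ hs.ne', det_smul_one_sub_smul _ _ hs.ne', hchar, hm]
  · intro n k₁ k₂ r G H₁ H₂ hG hchar hcor
    obtain rfl := card_eq hchar
    have hd (v : Fin n) : G.degree v = r := by convert hG v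
    have hroots : {x : ℝ | ((Aalpha H₁ α).charpoly.comp
        (X - C (α * Fintype.card G.edgeSet))).eval x = 0}.Finite := by
      refine finite_setOfPred_isRoot ?_
      exact ((charpoly_monic _).comp_X_sub_C _).ne_zero
    refine eq_of_infinite_eval_eq _ _
      (((Set.Ioi_infinite (3 + (Fintype.card (Fin k₁) : ℝ) + 2 * r)).sdiff hroots).mono ?_)
    rintro x ⟨hx, hxroot⟩
    obtain ⟨hc, hs, hp⟩ :=
      schur_constants_pos hα (Nat.cast_nonneg _) r.cast_nonneg hx rfl rfl rfl
    have hy : (Aalpha H₁ α).charpoly.eval (x - α * Fintype.card G.edgeSet) ≠ 0 := by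
      simpa using hxroot
    rw [Set.mem_ofPred_eq, eval_charpoly_rEdgeJoin H₁ hd rfl hc.ne' rfl rfl hp.ne',
      eval_charpoly_rEdgeJoin H₂ hd rfl hc.ne' rfl rfl hp.ne',
      det_smul_one_sub_sub_const _ _ _ hy, det_smul_one_sub_sub_const _ _ _ (hchar ▸ hy),
      hchar, hcor]
end
end
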